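/- Five-term functional equation for the characteristic-p dilogarithm ℓi₂^(p): Let k be a field of characteristic p ≥ 5 and let x = s + at, y = u + bt be elements of (k[t]/(t²))^♭ (i.e. x(1−x) and y(1−y) are units, meaning s, u ∉ {0,1}) with x − y a unit (s ≠ u). Then ℓi₂^(p)([x]) − ℓi₂^(p)([y]) + ℓi₂^(p)([y/x]) − ℓi₂^(p)([(1−x⁻¹)/(1−y⁻¹)]) + ℓi₂^(p)([(1−x)/(1−y)]) = 0, where ℓi₂^(p)([s+αt]) = (α^p/(s^p(1−s)^p))·£₁(s) and £₁(s) = ∑_{1≤i≤p-1} s^i/i. -/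

import Mathlib

open Finset TrivSqZeroExt

/-- The Kontsevich 1½-logarithm `£₁(s) = ∑_{i=1}^{p-1} s^i / i`. -/
noncomputable def kontsevichLog (p : ℕ) {k : Type*} [Field k] (s : k) : k :=
  ∑ i ∈ Finset.Icc 1 (p - 1), (i : k)⁻¹ * s ^ i

/-- The characteristic `p` dilogarithm `ℓi₂^(p)` on `k₂ = k[t]/(t²)`
(realized as dual numbers): `ℓi₂^(p)(s + αt) = (α^p/(s^p(1-s)^p))·£₁(s)`. -/
noncomputable def li2p (p : ℕ) {k : Type*} [Field k] (z : DualNumber k) : k :=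
  (snd z) ^ p / ((fst z) ^ p * (1 - fst z) ^ p) * kontsevichLog p (fst z)

/-!
Substituting `z = y`, `w = 1 - x` and using `ℓi₂(1 - x) = -ℓi₂(x)`, the five-term relation becomes
Abel's form
`ℓi₂(z) + ℓi₂(w) + ℓi₂(zw / ((1 - z)(1 - w))) = ℓi₂(z / (1 - w)) + ℓi₂(w / (1 - z))`.

In odd characteristic `p`, `£₁(s) = φ(s, 1 - s)` for the polynomial
`φ(a, b) = ((a + b)^p - a^p - b^p) / p`, which is homogeneous of degree `p` and a symmetric
2-cocycle, since `pφ` is the coboundary of `a ↦ a^p`. Moreover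
`ℓi₂(n / (n + m)) = (dlog n - dlog m)^p φ(n, m) / (n + m)^p`. Taking `m = 1 - z - w` in the last
three terms of Abel's form, the coefficients of `(dlog z)^p` and `(dlog w)^p` vanish by the cocycle
identity, once `(dlog m)^p` is eliminated with the Frobenius twist of `dm + dz + dw = 0`.
-/

/-- The integral form of `((a + b) ^ p - a ^ p - b ^ p) / p`. For an odd prime `p` it is the
homogenization of `kontsevichLog p`: see `kontsevichLog_eq_frobeniusDefect`. -/
def frobeniusDefect (p : ℕ) {R : Type*} [CommRing R] (a b : R) : R :=
  ∑ i ∈ Ioo 0 p, a ^ i * b ^ (p - i) * ↑(p.choose i / p)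

section FrobeniusDefect

variable {p : ℕ} {R : Type*} [CommRing R]

theorem map_frobeniusDefect {S F : Type*} [CommRing S] [FunLike F R S] [RingHomClass F R S]
    (f : F) (a b : R) :
    f (frobeniusDefect p a b) = frobeniusDefect p (f a) (f b) := by
  simp [frobeniusDefect]

theorem natCast_mul_frobeniusDefect (hp : p.Prime) (a b : R) :
    (p : R) * frobeniusDefect p a b = (a + b) ^ p - a ^ p - b ^ p := by
  rw [frobeniusDefect, add_pow_prime_eq' hp a b]
  ring

theorem frobeniusDefect_comm (a b : R) : frobeniusDefect p a b = frobeniusDefect p b a := by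
  refine sum_nbij' (p - ·) (p - ·) ?_ ?_ ?_ ?_ ?_ <;> intro i hi <;> rw [mem_Ioo] at hi
  · exact mem_Ioo.2 (by lia)
  · exact mem_Ioo.2 (by lia)
  · exact Nat.sub_sub_self hi.2.le
  · exact Nat.sub_sub_self hi.2.le
  · rw [Nat.choose_symm hi.2.le, Nat.sub_sub_self hi.2.le, mul_comm (a ^ i)]

theorem frobeniusDefect_mul_mul (c a b : R) :
    frobeniusDefect p (c * a) (c * b) = c ^ p * frobeniusDefect p a b := by
  rw [frobeniusDefect, frobeniusDefect, mul_sum]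
  refine sum_congr rfl fun i hi => ?_
  rw [mul_pow, mul_pow, ← pow_mul_pow_sub c (mem_Ioo.1 hi).2.le]
  ring

theorem frobeniusDefect_cocycle (hp : p.Prime) (a b c : R) :
    frobeniusDefect p a b + frobeniusDefect p (a + b) c =
      frobeniusDefect p b c + frobeniusDefect p a (b + c) := by
  have universal (x y z : MvPolynomial (Fin 3) ℤ) :
      frobeniusDefect p x y + frobeniusDefect p (x + y) z =
        frobeniusDefect p y z + frobeniusDefect p x (y + z) := by
    -- Over `ℤ` the factor `p` is cancellable, so both sides may be multiplied by `p`.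
    refine mul_left_cancel₀ (Nat.cast_ne_zero.2 hp.ne_zero : (p : MvPolynomial _ ℤ) ≠ 0) ?_
    simp only [mul_add, natCast_mul_frobeniusDefect hp]
    ring
  simpa [map_frobeniusDefect] using congrArg (MvPolynomial.aeval ![a, b, c])
    (universal (.X 0) (.X 1) (.X 2))

theorem frobeniusDefect_neg_add (hp : p.Prime) (hodd : Odd p) (a b : R) :
    frobeniusDefect p (-a) (a + b) = -frobeniusDefect p a b := by
  have universal (x y : MvPolynomial (Fin 2) ℤ) :
      frobeniusDefect p (-x) (x + y) = -frobeniusDefect p x y := by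
    refine mul_left_cancel₀ (Nat.cast_ne_zero.2 hp.ne_zero : (p : MvPolynomial _ ℤ) ≠ 0) ?_
    rw [mul_neg, natCast_mul_frobeniusDefect hp, natCast_mul_frobeniusDefect hp, hodd.neg_pow,
      neg_add_cancel_left]
    ring
  simpa [map_frobeniusDefect] using congrArg (MvPolynomial.aeval ![a, b])
    (universal (.X 0) (.X 1))

/-- This is `frobeniusDefect_cocycle` for `b * c`, `b * (s - b - c)`, `(s - b) * (s - b - c)`, whose
partial sums factor as `(s - b) * b` and `s * (s - b - c)`. -/
theorem frobeniusDefect_four_term (hp : p.Prime) (s b c : R) :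
    (s - b - c) ^ p * frobeniusDefect p b (s - b) + frobeniusDefect p (b * c) (s * (s - b - c)) =
      b ^ p * frobeniusDefect p c (s - b - c) + (s - b) ^ p * frobeniusDefect p b (s - b - c) := by
  have hcocycle := frobeniusDefect_cocycle hp (b * c) ((s - b - c) * b) ((s - b - c) * (s - b))
  have hleft : b * c + (s - b - c) * b = (s - b) * b := by ring
  have hright : (s - b - c) * b + (s - b - c) * (s - b) = s * (s - b - c) := by ring
  rw [hleft, hright, frobeniusDefect_mul_mul, mul_comm _ b, mul_comm _ (s - b),
    frobeniusDefect_mul_mul, frobeniusDefect_mul_mul] at hcocycle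
  exact hcocycle.symm

/-- Multiplied by `(1 - b - c) ^ p`, this is the combination of `frobeniusDefect_four_term` for
`(1, b, c)` and `(1, c, b)` with coefficients `β / (1 - b) ^ p` and `γ / (1 - c) ^ p`. -/
theorem frobeniusDefect_abel {k : Type*} [Field k] [CharP k p] (hp : p.Prime) {b c α β γ : k}
    (hb : 1 - b ≠ 0) (hc : 1 - c ≠ 0) (hbc : 1 - b - c ≠ 0)
    (hsum : (1 - b - c) ^ p * α + b ^ p * β + c ^ p * γ = 0) :
    β / (1 - b) ^ p * frobeniusDefect p b (1 - b) + γ / (1 - c) ^ p * frobeniusDefect p c (1 - c) +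
        (β + γ - α) * (frobeniusDefect p (b * c) (1 - b - c) / ((1 - b) * (1 - c)) ^ p) =
      (β - α) * (frobeniusDefect p b (1 - b - c) / (1 - c) ^ p) +
        (γ - α) * (frobeniusDefect p c (1 - b - c) / (1 - b) ^ p) := by
  have : Fact p.Prime := ⟨hp⟩
  have hfourb := frobeniusDefect_four_term hp 1 b c
  have hfourc := frobeniusDefect_four_term hp 1 c b
  rw [one_mul] at hfourb
  rw [one_mul, mul_comm c b, sub_right_comm] at hfourc
  have hb0 := pow_ne_zero p hb
  have hc0 := pow_ne_zero p hc
  have hbc0 := pow_ne_zero p hbc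
  generalize frobeniusDefect p (b * c) (1 - b - c) = φ at *
  rw [mul_pow]
  simp only [sub_pow_char, one_pow] at *
  field_simp
  refine mul_left_cancel₀ hbc0 ?_
  linear_combination β * (1 - c ^ p) * hfourb + γ * (1 - b ^ p) * hfourc +
    ((1 - b ^ p) * frobeniusDefect p b (1 - b - c) +
      (1 - c ^ p) * frobeniusDefect p c (1 - b - c) - φ) * hsum

end FrobeniusDefect

section KontsevichLog

variable {p : ℕ} {k : Type*} [Field k] [CharP k p]

theorem natCast_choose_sub_one {R : Type*} [CommRing R] [CharP R p] (hp : p.Prime) {j : ℕ}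
    (hj : j < p) : ((p - 1).choose j : R) = (-1) ^ j := by
  induction j with
  | zero => simp
  | succ j ih =>
    have hpascal : p.choose (j + 1) = (p - 1).choose j + (p - 1).choose (j + 1) := by
      rw [← Nat.choose_succ_succ', Nat.sub_add_cancel hp.one_le]
    have hzero : (p.choose (j + 1) : R) = 0 :=
      (CharP.cast_eq_zero_iff R p _).2 (hp.dvd_choose_self j.succ_ne_zero hj)
    rw [hpascal, Nat.cast_add, ih (by lia)] at hzero
    rw [pow_succ]
    linear_combination hzero

theorem natCast_choose_div_self (hp : p.Prime) {i : ℕ} (hi : i ∈ Ioo 0 p) :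
    ((p.choose i / p : ℕ) : k) = (-1) ^ (i - 1) * (i : k)⁻¹ := by
  obtain ⟨hpos, hlt⟩ := mem_Ioo.1 hi
  have hi0 : (i : k) ≠ 0 := by
    rw [Ne, CharP.cast_eq_zero_iff k p]
    exact Nat.not_dvd_of_pos_of_lt hpos hlt
  have habsorb : p.choose i / p * i = (p - 1).choose (i - 1) := by
    refine Nat.eq_of_mul_eq_mul_left hp.pos ?_
    rw [← mul_assoc, Nat.mul_div_cancel' (hp.dvd_choose_self hpos.ne' hlt)]
    simpa [Nat.sub_add_cancel hp.one_le, Nat.sub_add_cancel hpos] using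
      (Nat.add_one_mul_choose_eq (p - 1) (i - 1)).symm
  rw [eq_mul_inv_iff_mul_eq₀ hi0, ← Nat.cast_mul, habsorb, natCast_choose_sub_one hp (by lia)]

theorem kontsevichLog_eq_frobeniusDefect (hp : p.Prime) (hodd : Odd p) (s : k) :
    kontsevichLog p s = frobeniusDefect p s (1 - s) := by
  rw [← neg_neg (frobeniusDefect p s _), ← frobeniusDefect_neg_add hp hodd, add_sub_cancel,
    frobeniusDefect, ← sum_neg_distrib, kontsevichLog,
    show Icc 1 (p - 1) = Ioo 0 p by ext; simp only [mem_Icc, mem_Ioo]; lia]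
  refine sum_congr rfl fun i hi => ?_
  have hsign : (-1 : k) ^ i * (-1) ^ (i - 1) = -1 := by
    rw [← pow_add]
    exact Odd.neg_one_pow (by have := mem_Ioo.1 hi; grind)
  rw [natCast_choose_div_self hp hi, one_pow, neg_pow s]
  linear_combination (s ^ i * (i : k)⁻¹) * hsign

theorem kontsevichLog_one_sub (hp : p.Prime) (hodd : Odd p) (s : k) :
    kontsevichLog p (1 - s) = kontsevichLog p s := by
  rw [kontsevichLog_eq_frobeniusDefect hp hodd, kontsevichLog_eq_frobeniusDefect hp hodd,
    frobeniusDefect_comm, sub_sub_cancel]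

theorem kontsevichLog_div (hp : p.Prime) (hodd : Odd p) {a d : k} (hd : d ≠ 0) :
    kontsevichLog p (a / d) = frobeniusDefect p a (d - a) / d ^ p := by
  rw [kontsevichLog_eq_frobeniusDefect hp hodd, eq_div_iff (pow_ne_zero p hd), mul_comm,
    ← frobeniusDefect_mul_mul, mul_sub, mul_one, mul_div_cancel₀ _ hd]

end KontsevichLog

section Dlog

variable {k : Type*} [Field k]

/-- The logarithmic derivative `α / s` of the dual number `s + αt`, a homomorphism from the units to
the additive group of `k`. It takes the junk value `0` at non-units. -/
def dlog (z : DualNumber k) : k :=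
  snd z / fst z

theorem fst_mul_dlog {z : DualNumber k} (hz : fst z ≠ 0) : fst z * dlog z = snd z :=
  mul_div_cancel₀ _ hz

theorem dlog_mul {z w : DualNumber k} (hz : fst z ≠ 0) (hw : fst w ≠ 0) :
    dlog (z * w) = dlog z + dlog w := by
  simp only [dlog, fst_mul, snd_mul, smul_eq_mul, op_smul_eq_smul]
  field_simp
  ring

theorem dlog_sub_dlog_one_sub {z : DualNumber k} (h0 : fst z ≠ 0) (h1 : 1 - fst z ≠ 0) :
    dlog z - dlog (1 - z) = dlog z / (1 - fst z) := by
  simp only [dlog, fst_sub, snd_sub, fst_one, snd_one]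
  field_simp
  ring

end Dlog

section Li2p

variable {p : ℕ} {k : Type*} [Field k]

theorem li2p_eq_dlog (z : DualNumber k) :
    li2p p z = (dlog z / (1 - fst z)) ^ p * kontsevichLog p (fst z) := by
  rw [li2p, dlog, div_div, div_pow, mul_pow]

variable [CharP k p]

theorem li2p_one_sub (hp : p.Prime) (hodd : Odd p) (z : DualNumber k) :
    li2p p (1 - z) = -li2p p z := by
  simp only [li2p, fst_sub, snd_sub, fst_one, snd_one, zero_sub, hodd.neg_pow, sub_sub_cancel,
    kontsevichLog_one_sub hp hodd]
  ring

theorem li2p_eq_frobeniusDefect (hp : p.Prime) (hodd : Odd p) (z : DualNumber k) :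
    li2p p z = dlog z ^ p / (1 - fst z) ^ p * frobeniusDefect p (fst z) (1 - fst z) := by
  rw [li2p_eq_dlog, div_pow, kontsevichLog_eq_frobeniusDefect hp hodd]

theorem li2p_mul_inverse (hp : p.Prime) (hodd : Odd p) {n d : DualNumber k}
    (hn : fst n ≠ 0) (hd : fst d ≠ 0) (hnd : fst (d - n) ≠ 0) :
    li2p p (n * Ring.inverse d) =
      (dlog n - dlog (d - n)) ^ p * (frobeniusDefect p (fst n) (fst (d - n)) / fst d ^ p) := by
  obtain ⟨z, rfl⟩ : ∃ z, n = z * d :=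
    ⟨_, (Ring.inverse_mul_cancel_right d n (isUnit_iff_isUnit_fst.2 hd.isUnit)).symm⟩
  have hz : fst z ≠ 0 := left_ne_zero_of_mul (fst_mul z d ▸ hn)
  rw [← one_sub_mul, fst_mul] at hnd
  have hz1 : fst (1 - z) ≠ 0 := left_ne_zero_of_mul hnd
  rw [Ring.mul_inverse_cancel_right d z (isUnit_iff_isUnit_fst.2 hd.isUnit), li2p_eq_dlog,
    ← dlog_sub_dlog_one_sub hz (by simpa using hz1), ← one_sub_mul, dlog_mul hz hd,
    dlog_mul hz1 hd, add_sub_add_right_eq_sub, one_sub_mul, fst_sub, ← kontsevichLog_div hp hodd hd,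
    fst_mul, mul_div_cancel_right₀ _ hd]

/-- The arguments of the last three terms are `n / d` with the same `d - n = 1 - z - w`. -/
theorem li2p_abel (hp : p.Prime) (hodd : Odd p) {z w : DualNumber k}
    (hz0 : fst z ≠ 0) (hz1 : 1 - fst z ≠ 0) (hw0 : fst w ≠ 0) (hw1 : 1 - fst w ≠ 0)
    (hzw : 1 - fst z - fst w ≠ 0) :
    li2p p z + li2p p w + li2p p (z * w * Ring.inverse ((1 - z) * (1 - w))) =
      li2p p (z * Ring.inverse (1 - w)) + li2p p (w * Ring.inverse (1 - z)) := by
  have : Fact p.Prime := ⟨hp⟩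
  have hdlog : fst (1 - z - w) * dlog (1 - z - w) + fst z * dlog z + fst w * dlog w = 0 := by
    rw [fst_mul_dlog (by simpa using hzw), fst_mul_dlog hz0, fst_mul_dlog hw0]
    simp only [snd_sub, snd_one]
    ring
  have hsum : (1 - fst z - fst w) ^ p * dlog (1 - z - w) ^ p + fst z ^ p * dlog z ^ p +
      fst w ^ p * dlog w ^ p = 0 := by
    simpa [mul_pow, add_pow_char, hp.ne_zero] using congrArg (· ^ p) hdlog
  have hprod : (1 - z) * (1 - w) - z * w = 1 - z - w := by ring
  have hcomm : 1 - w - z = 1 - z - w := sub_right_comm 1 w z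
  rw [li2p_eq_frobeniusDefect hp hodd z, li2p_eq_frobeniusDefect hp hodd w,
    li2p_mul_inverse hp hodd (by simp [*]) (by simp [*]) (by simp [*]),
    li2p_mul_inverse hp hodd hz0 (by simp [*]) (by simp [*]),
    li2p_mul_inverse hp hodd hw0 (by simp [*]) (by simp [*])]
  simp only [hprod, hcomm, fst_mul, fst_sub, fst_one, dlog_mul hz0 hw0,
    sub_pow_char (dlog _), sub_pow_char (_ + _), add_pow_char]
  exact frobeniusDefect_abel hp hz1 hw1 hzw hsum

end Li2p

theorem one_sub_inverse_mul_inverse {R : Type*} [CommRing R] {x y : R} (hx : IsUnit x)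
    (hy : IsUnit y) (hy1 : IsUnit (1 - y)) :
    (1 - Ring.inverse x) * Ring.inverse (1 - Ring.inverse y) =
      y * (1 - x) * Ring.inverse ((1 - y) * x) := by
  have hxx : x * Ring.inverse x = 1 := Ring.mul_inverse_cancel x hx
  have hyy : Ring.inverse y * y = 1 := Ring.inverse_mul_cancel y hy
  have hfactor : 1 - Ring.inverse y = -(1 - y) * Ring.inverse y := by linear_combination -hyy
  have hinv : Ring.inverse (1 - Ring.inverse y) * (1 - y) = -y := by
    have := Ring.inverse_mul_cancel _ (hfactor ▸ hy1.neg.mul hy.ringInverse)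
    linear_combination -y * this - Ring.inverse (1 - Ring.inverse y) * hyy
  rw [Ring.eq_mul_inverse_iff_mul_eq _ _ _ (hy1.mul hx)]
  linear_combination (1 - Ring.inverse x) * x * hinv + y * hxx

theorem li2p_five_term_general (p : ℕ) [Fact p.Prime] (hp2 : p ≠ 2)
    (k : Type*) [Field k] [CharP k p] (x y : DualNumber k)
    (hx0 : fst x ≠ 0) (hx1 : fst x ≠ 1) (hy0 : fst y ≠ 0) (hy1 : fst y ≠ 1)
    (hxy : fst x ≠ fst y) :
    li2p p x - li2p p y + li2p p (y * Ring.inverse x) -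
        li2p p ((1 - Ring.inverse x) * Ring.inverse (1 - Ring.inverse y)) +
        li2p p ((1 - x) * Ring.inverse (1 - y)) = 0 := by
  have hp : p.Prime := Fact.out
  have hodd : Odd p := hp.odd_of_ne_two hp2
  have habel := li2p_abel hp hodd (z := y) (w := 1 - x) hy0 (sub_ne_zero.2 hy1.symm)
    (by simpa [sub_eq_zero] using hx1.symm) (by simpa using hx0)
    (by simpa [sub_eq_zero] using hxy)
  rw [sub_sub_cancel, li2p_one_sub hp hodd] at habel
  rw [one_sub_inverse_mul_inverse (isUnit_iff_isUnit_fst.2 hx0.isUnit)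
    (isUnit_iff_isUnit_fst.2 hy0.isUnit)
    (isUnit_iff_isUnit_fst.2 (by simpa [sub_eq_zero] using hy1.symm))]
  linear_combination -habel

/-- Five-term functional equation for `ℓi₂^(p)`: for `x, y ∈ (k[t]/(t²))^♭` with
`x − y` a unit,
`ℓi₂^(p)(x) − ℓi₂^(p)(y) + ℓi₂^(p)(y/x) − ℓi₂^(p)((1−x⁻¹)/(1−y⁻¹)) + ℓi₂^(p)((1−x)/(1−y)) = 0`. -/
theorem li2p_five_term (p : ℕ) [Fact p.Prime] (hp5 : 5 ≤ p)
    (k : Type*) [Field k] [CharP k p] (x y : DualNumber k)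
    (hx0 : fst x ≠ 0) (hx1 : fst x ≠ 1) (hy0 : fst y ≠ 0) (hy1 : fst y ≠ 1)
    (hxy : fst x ≠ fst y) :
    li2p p x - li2p p y + li2p p (y * Ring.inverse x) -
        li2p p ((1 - Ring.inverse x) * Ring.inverse (1 - Ring.inverse y)) +
        li2p p ((1 - x) * Ring.inverse (1 - y)) = 0 := by
  exact li2p_five_term_general p (by lia) k x y hx0 hx1 hy0 hy1 hxy
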